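/- Let n = 1, 1 < p < ∞, 1 ≤ q ≤ ∞, and A < a ≤ b < B real numbers. There exists a constant C(p,q) ≥ 1 such that C(p,q)^{-1}(σ₁^{1−p} + σ₂^{1−p}) ≤ cap_{p,q}([a,b], (A,B)) ≤ C(p,q)(σ₁^{1−p} + σ₂^{1−p}), where σ₁ = a − A and σ₂ = B − b. -/

import Mathlib

open MeasureTheory Set
open scoped ENNReal

/-- The distribution function `μ_{[f]}(s) = μ({|f| > s})`. -/
noncomputable def distribFn {α : Type*} [MeasurableSpace α] (μ : Measure α)
    (f : α → ℝ) (s : ℝ) : ℝ≥0∞ :=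
  μ {x | s < |f x|}

/-- The Lorentz `p,q`-(quasi)norm, `1 < p < ∞`, `1 ≤ q ≤ ∞`. -/
noncomputable def lorentzNorm {α : Type*} [MeasurableSpace α] (μ : Measure α)
    (p : ℝ) (q : ℝ≥0∞) (f : α → ℝ) : ℝ≥0∞ :=
  if q = ⊤ then ⨆ s : Ioi (0 : ℝ), ENNReal.ofReal s.1 * distribFn μ f s.1 ^ (1 / p)
  else (ENNReal.ofReal p *
      ∫⁻ s in Ioi (0 : ℝ),
        ENNReal.ofReal (s ^ (q.toReal - 1)) * distribFn μ f s ^ (q.toReal / p)) ^ (1 / q.toReal)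

/-- The one-dimensional Sobolev–Lorentz `p,q`-capacitance of the conductor `(K, Ω)`,
`Ω ⊆ ℝ`: the infimum of `‖u'‖_{L^{p,q}(Ω, m₁)}^p` over Lipschitz functions `u`
compactly supported in `Ω` with `u ≥ 1` in a neighborhood of `K`. -/
noncomputable def capacitance1 (p : ℝ) (q : ℝ≥0∞) (K Ω : Set ℝ) : ℝ≥0∞ :=
  ⨅ u ∈ {u : ℝ → ℝ | (∃ c, LipschitzWith c u) ∧ HasCompactSupport u ∧ tsupport u ⊆ Ω ∧
      K ⊆ interior {x | 1 ≤ u x}},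
    lorentzNorm (volume.restrict Ω) p q (fun x => |deriv u x|) ^ p

open Metric

/-!
Write `κ` for the Lorentz norm of the indicator of a set of measure one, so that
`‖h 𝟙_S‖_{p,q} = κ h μ(S)^{1/p}`. Both inequalities follow from this formula.

For the upper bound, let `u` be `1` near `[a, b]` and fall to `0` with slope `2 / δ` within distance
`δ = min(σ₁, σ₂) / 2`. Then `|u'|` is at most `2 / δ` and lives on a set of measure `2 δ`, whence
`‖u'‖^p ≲ δ^{-p} δ ≲ σ₁^{1-p} + σ₂^{1-p}`.

For the lower bound, comparing `f` with `s 𝟙_{|f| > s}` gives `κ ‖f‖_{p,∞} ≤ ‖f‖_{p,q}`. An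
admissible `u` vanishes at `A` and is at least `1` at `a`, so `1 ≤ ∫_A^a |u'|`. In the layer cake
formula for this integral, the heights below `1 / (2 σ₁)` contribute at most `1 / 2`, and those
above at most a multiple of `σ₁^{p-1} ‖u'‖_{p,∞}^p`, so `σ₁^{1-p} ≲ ‖u'‖^p`; likewise on `[b, B]`.
-/

lemma lintegral_Ioo_rpow_sub_one {r h : ℝ} (hr : 0 < r) (hh : 0 ≤ h) :
    ∫⁻ s in Ioo 0 h, ENNReal.ofReal (s ^ (r - 1)) = ENNReal.ofReal (h ^ r / r) := by
  have hint : IntegrableOn (fun s : ℝ => s ^ (r - 1)) (Ioc 0 h) :=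
    (intervalIntegrable_iff_integrableOn_Ioc_of_le hh).1
      (intervalIntegral.intervalIntegrable_rpow' (by linarith))
  have hnonneg : 0 ≤ᵐ[volume.restrict (Ioc 0 h)] fun s : ℝ => s ^ (r - 1) :=
    (ae_restrict_mem measurableSet_Ioc).mono fun s hs => Real.rpow_nonneg hs.1.le _
  rw [restrict_Ioo_eq_restrict_Ioc, ← ofReal_integral_eq_lintegral_ofReal hint hnonneg,
    ← intervalIntegral.integral_of_le hh, integral_rpow (Or.inl (by linarith)), sub_add_cancel,
    Real.zero_rpow hr.ne', sub_zero]

lemma lintegral_Ioi_rpow_neg {p t : ℝ} (hp : 1 < p) (ht : 0 < t) :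
    ∫⁻ s in Ioi t, ENNReal.ofReal (s ^ (-p)) = ENNReal.ofReal (t ^ (1 - p) / (p - 1)) := by
  have hnonneg : 0 ≤ᵐ[volume.restrict (Ioi t)] fun s : ℝ => s ^ (-p) :=
    (ae_restrict_mem measurableSet_Ioi).mono fun s hs => Real.rpow_nonneg (ht.trans hs).le _
  rw [← ofReal_integral_eq_lintegral_ofReal (integrableOn_Ioi_rpow_of_lt (by linarith) ht) hnonneg,
    integral_Ioi_rpow_of_lt (by linarith) ht, neg_add_eq_sub, ← neg_sub p 1, neg_div_neg_eq]

section Lorentz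

variable {α β : Type*} [MeasurableSpace α] [MeasurableSpace β] {μ : Measure α} {ν : Measure β}
  {f : α → ℝ} {g : β → ℝ} {p : ℝ} {q : ℝ≥0∞}

lemma lorentzNorm_top :
    lorentzNorm μ p ⊤ f = ⨆ s : Ioi (0 : ℝ), ENNReal.ofReal s * distribFn μ f s ^ (1 / p) :=
  if_pos rfl

lemma lorentzNorm_of_ne_top (hq : q ≠ ⊤) :
    lorentzNorm μ p q f = (ENNReal.ofReal p * ∫⁻ s in Ioi (0 : ℝ),
      ENNReal.ofReal (s ^ (q.toReal - 1)) * distribFn μ f s ^ (q.toReal / p)) ^ (1 / q.toReal) :=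
  if_neg hq

lemma lorentzNorm_le_of_distribFn_le (hp : 0 ≤ p)
    (h : ∀ s, 0 < s → distribFn μ f s ≤ distribFn ν g s) :
    lorentzNorm μ p q f ≤ lorentzNorm ν p q g := by
  rcases eq_or_ne q ⊤ with rfl | hq
  · simp only [lorentzNorm_top]
    exact iSup_mono fun s => by gcongr; exact h s s.2
  · simp only [lorentzNorm_of_ne_top hq]
    refine ENNReal.rpow_le_rpow (mul_le_mul_right ?_ _) (by positivity)
    refine setLIntegral_mono' measurableSet_Ioi fun s hs => ?_
    gcongr
    exact h s hs

lemma lorentzNorm_mono {f g : α → ℝ} (hp : 0 ≤ p) (h : ∀ x, |f x| ≤ |g x|) :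
    lorentzNorm μ p q f ≤ lorentzNorm μ p q g :=
  lorentzNorm_le_of_distribFn_le hp fun _ _ => measure_mono fun x hx => lt_of_lt_of_le hx (h x)

lemma lorentzNorm_restrict_of_support_subset {Ω : Set α} (hp : 0 ≤ p)
    (h : Function.support f ⊆ Ω) : lorentzNorm (μ.restrict Ω) p q f = lorentzNorm μ p q f := by
  have hdistrib : ∀ s, 0 < s → distribFn (μ.restrict Ω) f s = distribFn μ f s := fun s hs =>
    Measure.restrict_eq_self μ fun x hx => h (abs_pos.1 (hs.trans hx))
  exact le_antisymm (lorentzNorm_le_of_distribFn_le hp fun s hs => (hdistrib s hs).le)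
    (lorentzNorm_le_of_distribFn_le hp fun s hs => (hdistrib s hs).ge)

lemma distribFn_indicator_const {S : Set α} {h s : ℝ} (hs : 0 ≤ s) (hh : 0 ≤ h) :
    distribFn μ (S.indicator fun _ => h) s = (Iio h).indicator (fun _ => μ S) s := by
  have habs : ∀ x, |S.indicator (fun _ => h) x| = S.indicator (fun _ => h) x := fun x =>
    abs_of_nonneg (indicator_nonneg (fun _ _ => hh) x)
  simp only [distribFn, habs]
  by_cases hsh : s < h
  · rw [indicator_of_mem (show s ∈ Iio h from hsh)]
    congr 1 with x
    by_cases hx : x ∈ S <;> simp [hx, hsh, hs]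
  · rw [indicator_of_notMem (show s ∉ Iio h from hsh)]
    refine measure_mono_null (fun x hx => ?_) measure_empty
    have hle : S.indicator (fun _ => h) x ≤ h := indicator_le_self' (fun _ _ => hh) x
    exact hsh (lt_of_lt_of_le hx hle)

/-- The Lorentz norm `κ = (p / q) ^ (1 / q)` of the indicator of a set of measure one, which is `1`
for `q = ⊤`. -/
noncomputable def lorentzIndicatorConst (p : ℝ) (q : ℝ≥0∞) : ℝ :=
  if q = ⊤ then 1 else (p / q.toReal) ^ (1 / q.toReal)

lemma lorentzIndicatorConst_pos (hp : 0 < p) (hq : 0 < q) : 0 < lorentzIndicatorConst p q := by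
  unfold lorentzIndicatorConst
  split_ifs with hq_top
  · exact one_pos
  · exact Real.rpow_pos_of_pos (div_pos hp (ENNReal.toReal_pos hq.ne' hq_top)) _

lemma lorentzNorm_top_indicator_const {S : Set α} {h : ℝ} (hp : 0 < p) (hh : 0 < h) :
    lorentzNorm μ p ⊤ (S.indicator fun _ => h) = ENNReal.ofReal h * μ S ^ (1 / p) := by
  rw [lorentzNorm_top]
  apply le_antisymm
  · refine iSup_le fun ⟨s, hs⟩ => ?_
    rw [distribFn_indicator_const (le_of_lt hs) hh.le]
    by_cases hsh : s ∈ Iio h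
    · rw [indicator_of_mem hsh]
      gcongr
      exact le_of_lt hsh
    · rw [indicator_of_notMem hsh, ENNReal.zero_rpow_of_pos (by positivity), mul_zero]
      exact zero_le
  · have hlim : Filter.Tendsto (fun s => ENNReal.ofReal s * μ S ^ (1 / p)) (nhdsWithin h (Iio h))
        (nhds (ENNReal.ofReal h * μ S ^ (1 / p))) :=
      ENNReal.Tendsto.mul_const
        ((ENNReal.continuous_ofReal.tendsto h).mono_left nhdsWithin_le_nhds)
        (Or.inl (ENNReal.ofReal_pos.2 hh).ne')
    refine le_of_tendsto hlim ?_
    filter_upwards [Ioo_mem_nhdsLT hh] with s hs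
    refine le_iSup_of_le ⟨s, hs.1⟩ (le_of_eq ?_)
    rw [distribFn_indicator_const hs.1.le hh.le, indicator_of_mem (show s ∈ Iio h from hs.2)]

lemma lorentzNorm_indicator_const {S : Set α} {h : ℝ} (hp : 0 < p) (hq : 0 < q) (hh : 0 < h) :
    lorentzNorm μ p q (S.indicator fun _ => h) =
      ENNReal.ofReal (lorentzIndicatorConst p q * h) * μ S ^ (1 / p) := by
  rcases eq_or_ne q ⊤ with rfl | hq_top
  · rw [lorentzNorm_top_indicator_const hp hh, lorentzIndicatorConst, if_pos rfl, one_mul]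
  have hr : 0 < q.toReal := ENNReal.toReal_pos hq.ne' hq_top
  rw [lorentzNorm_of_ne_top hq_top, lorentzIndicatorConst, if_neg hq_top]
  set r := q.toReal
  have hintegral : ∫⁻ s in Ioi (0 : ℝ), ENNReal.ofReal (s ^ (r - 1)) *
      distribFn μ (S.indicator fun _ => h) s ^ (r / p) =
        ENNReal.ofReal (h ^ r / r) * μ S ^ (r / p) := by
    calc _ = ∫⁻ s in Ioi (0 : ℝ), (Iio h).indicator
          (fun s => ENNReal.ofReal (s ^ (r - 1)) * μ S ^ (r / p)) s := by
          refine setLIntegral_congr_fun measurableSet_Ioi fun s hs => ?_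
          rw [distribFn_indicator_const (le_of_lt hs) hh.le]
          by_cases hsh : s ∈ Iio h
          · simp only [indicator_of_mem hsh]
          · simp only [indicator_of_notMem hsh]
            rw [ENNReal.zero_rpow_of_pos (by positivity), mul_zero]
      _ = ∫⁻ s in Ioo 0 h, ENNReal.ofReal (s ^ (r - 1)) * μ S ^ (r / p) := by
          rw [setLIntegral_indicator measurableSet_Iio, inter_comm, Ioi_inter_Iio]
      _ = _ := by
          rw [lintegral_mul_const _ (by fun_prop), lintegral_Ioo_rpow_sub_one hr hh.le]
  have hconst : (p * (h ^ r / r)) ^ (1 / r) = (p / r) ^ (1 / r) * h := by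
    rw [mul_div_left_comm, mul_comm, Real.mul_rpow (by positivity) (by positivity), one_div,
      Real.rpow_rpow_inv hh.le hr.ne']
  rw [hintegral, ← mul_assoc, ← ENNReal.ofReal_mul hp.le,
    ENNReal.mul_rpow_of_nonneg _ _ (by positivity), ENNReal.ofReal_rpow_of_pos (by positivity),
    hconst, ← ENNReal.rpow_mul]
  congr 2
  field_simp

lemma mul_lorentzNorm_top_le_lorentzNorm (hp : 0 < p) (hq : 0 < q) :
    ENNReal.ofReal (lorentzIndicatorConst p q) * lorentzNorm μ p ⊤ f ≤ lorentzNorm μ p q f := by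
  rw [lorentzNorm_top, ENNReal.mul_iSup]
  refine iSup_le fun ⟨s, hs⟩ => ?_
  calc ENNReal.ofReal (lorentzIndicatorConst p q) *
        (ENNReal.ofReal s * distribFn μ f s ^ (1 / p))
      = lorentzNorm μ p q ({x | s < |f x|}.indicator fun _ => s) := by
        rw [lorentzNorm_indicator_const hp hq hs, ← mul_assoc,
          ENNReal.ofReal_mul (lorentzIndicatorConst_pos hp hq).le, distribFn]
    _ ≤ lorentzNorm μ p q f := lorentzNorm_mono hp.le fun x => by
        by_cases hx : x ∈ {x | s < |f x|}
        · rw [indicator_of_mem hx, abs_of_pos hs]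
          exact le_of_lt hx
        · rw [indicator_of_notMem hx, abs_zero]
          exact abs_nonneg _

lemma distribFn_le_rpow_lorentzNorm_top_mul {s : ℝ} (hp : 0 < p) (hs : 0 < s) :
    distribFn μ f s ≤ lorentzNorm μ p ⊤ f ^ p * ENNReal.ofReal (s ^ (-p)) := by
  have hweak : ENNReal.ofReal s * distribFn μ f s ^ (1 / p) ≤ lorentzNorm μ p ⊤ f := by
    rw [lorentzNorm_top]
    exact le_iSup (fun s : Ioi (0 : ℝ) => ENNReal.ofReal s * distribFn μ f s ^ (1 / p)) ⟨s, hs⟩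
  calc distribFn μ f s
      = (ENNReal.ofReal s * distribFn μ f s ^ (1 / p)) ^ p * ENNReal.ofReal (s ^ (-p)) := by
        rw [ENNReal.mul_rpow_of_nonneg _ _ hp.le, ← ENNReal.rpow_mul, one_div_mul_cancel hp.ne',
          ENNReal.rpow_one, ENNReal.ofReal_rpow_of_pos hs, mul_right_comm,
          ← ENNReal.ofReal_mul (by positivity), ← Real.rpow_add hs, add_neg_cancel,
          Real.rpow_zero, ENNReal.ofReal_one, one_mul]
    _ ≤ _ := by gcongr

lemma setLIntegral_enorm_le_mul_add_lorentzNorm_top {t : ℝ} (hp : 1 < p) (ht : 0 < t)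
    (hf : AEMeasurable f μ) (E : Set α) :
    ∫⁻ x in E, ‖f x‖ₑ ∂μ ≤ ENNReal.ofReal t * μ E +
      ENNReal.ofReal (t ^ (1 - p) / (p - 1)) * lorentzNorm μ p ⊤ f ^ p := by
  simp only [Real.enorm_eq_ofReal_abs]
  rw [lintegral_eq_lintegral_meas_lt _ (ae_of_all _ fun x => abs_nonneg _)
    (continuous_abs.measurable.comp_aemeasurable hf.restrict), ← Ioc_union_Ioi_eq_Ioi ht.le]
  refine (lintegral_union_le _ _ _).trans (add_le_add ?_ ?_)
  · calc ∫⁻ s in Ioc 0 t, μ.restrict E {x | s < |f x|}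
        ≤ ∫⁻ _ in Ioc 0 t, μ E := lintegral_mono fun _ => by
          simpa using measure_mono (μ := μ.restrict E) (subset_univ _)
      _ = ENNReal.ofReal t * μ E := by
          rw [setLIntegral_const, Real.volume_Ioc, sub_zero, mul_comm]
  · calc ∫⁻ s in Ioi t, μ.restrict E {x | s < |f x|}
        ≤ ∫⁻ s in Ioi t, lorentzNorm μ p ⊤ f ^ p * ENNReal.ofReal (s ^ (-p)) :=
          setLIntegral_mono' measurableSet_Ioi fun s hs =>
            (Measure.restrict_apply_le _ _).trans
              (distribFn_le_rpow_lorentzNorm_top_mul (by linarith) (ht.trans hs))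
      _ = _ := by
          rw [lintegral_const_mul _ (by fun_prop), lintegral_Ioi_rpow_neg hp ht, mul_comm]

lemma le_lorentzNorm_top_rpow_of_one_le_setLIntegral {E : Set α} {ℓ : ℝ} (hp : 1 < p) (hℓ : 0 < ℓ)
    (hf : AEMeasurable f μ) (hE : μ E ≤ ENNReal.ofReal ℓ) (hint : 1 ≤ ∫⁻ x in E, ‖f x‖ₑ ∂μ) :
    ENNReal.ofReal ((p - 1) / 2 ^ p * ℓ ^ (1 - p)) ≤ lorentzNorm μ p ⊤ f ^ p := by
  have hp' : 0 < p - 1 := by linarith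
  set k := ((2 * ℓ)⁻¹) ^ (1 - p) / (p - 1) with hk
  have hk_pos : 0 < k := by positivity
  have hsplit : ENNReal.ofReal (1 / 2) + ENNReal.ofReal (1 / 2) ≤
      ENNReal.ofReal (1 / 2) + ENNReal.ofReal k * lorentzNorm μ p ⊤ f ^ p := by
    calc ENNReal.ofReal (1 / 2) + ENNReal.ofReal (1 / 2) = 1 := by
          rw [← ENNReal.ofReal_add (by norm_num) (by norm_num), add_halves, ENNReal.ofReal_one]
      _ ≤ ENNReal.ofReal (2 * ℓ)⁻¹ * ENNReal.ofReal ℓ +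
          ENNReal.ofReal k * lorentzNorm μ p ⊤ f ^ p :=
        hint.trans <| (setLIntegral_enorm_le_mul_add_lorentzNorm_top (t := (2 * ℓ)⁻¹) hp
          (by positivity) hf E).trans (by gcongr)
      _ = _ := by
          rw [← ENNReal.ofReal_mul (by positivity)]
          congr 2
          field_simp
  have hhalf := (ENNReal.add_le_add_iff_left ENNReal.ofReal_ne_top).1 hsplit
  calc ENNReal.ofReal ((p - 1) / 2 ^ p * ℓ ^ (1 - p)) = ENNReal.ofReal (1 / 2 / k) := by
        congr 1
        rw [hk, Real.inv_rpow (by positivity), ← Real.rpow_neg (by positivity), neg_sub,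
          ← neg_sub p 1, Real.rpow_neg hℓ.le, Real.mul_rpow two_pos.le hℓ.le,
          Real.rpow_sub_one two_ne_zero]
        field_simp
    _ = ENNReal.ofReal (1 / 2) / ENNReal.ofReal k := ENNReal.ofReal_div_of_pos hk_pos
    _ ≤ _ := ENNReal.div_le_of_le_mul (by rwa [mul_comm])

end Lorentz

section Capacitance

variable {p : ℝ} {q : ℝ≥0∞} {K Ω : Set ℝ}

lemma enorm_sub_le_lintegral_enorm_deriv {u : ℝ → ℝ} {x y : ℝ}
    (hu : AbsolutelyContinuousOnInterval u x y) :
    ‖u y - u x‖ₑ ≤ ∫⁻ t in uIoc x y, ‖deriv u t‖ₑ := by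
  rw [← hu.integral_deriv_eq_sub, ← enorm_norm, intervalIntegral.norm_intervalIntegral_eq,
    enorm_norm]
  exact enorm_integral_le_lintegral_enorm _

lemma lorentzNorm_restrict_abs_deriv {u : ℝ → ℝ} (hp : 0 ≤ p) (hu : tsupport u ⊆ Ω) :
    lorentzNorm (volume.restrict Ω) p q (fun x => |deriv u x|) =
      lorentzNorm volume p q (deriv u) := by
  rw [lorentzNorm_restrict_of_support_subset hp]
  · exact le_antisymm (lorentzNorm_mono hp fun _ => (abs_abs _).le)
      (lorentzNorm_mono hp fun _ => (abs_abs _).ge)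
  · intro x hx
    exact hu (support_deriv_subset (abs_ne_zero.1 hx))

lemma ofReal_rpow_abs_sub_le_capacitance1 {x y : ℝ} (hp : 1 < p) (hq : 0 < q) (hx : x ∉ Ω)
    (hy : y ∈ K) :
    ENNReal.ofReal ((p - 1) * (lorentzIndicatorConst p q / 2) ^ p * |y - x| ^ (1 - p)) ≤
      capacitance1 p q K Ω := by
  have hp₀ : 0 < p := by linarith
  have hκ := lorentzIndicatorConst_pos hp₀ hq
  refine le_iInf₂ fun u ⟨⟨c, hlip⟩, _, hsupp, hone⟩ => ?_
  have hux : u x = 0 := image_eq_zero_of_notMem_tsupport fun h => hx (hsupp h)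
  have huy : y ∈ {x | 1 ≤ u x} := interior_subset (hone hy)
  have hxy : x ≠ y := fun h => absurd (h ▸ huy) (by simp [hux])
  have hint : 1 ≤ ∫⁻ t in uIoc x y, ‖deriv u t‖ₑ :=
    calc (1 : ℝ≥0∞) ≤ ‖u y - u x‖ₑ := by
          rw [hux, sub_zero, Real.enorm_eq_ofReal_abs, ENNReal.one_le_ofReal]
          exact huy.trans (le_abs_self _)
      _ ≤ _ := enorm_sub_le_lintegral_enorm_deriv
          hlip.lipschitzOnWith.absolutelyContinuousOnInterval
  have hweak := le_lorentzNorm_top_rpow_of_one_le_setLIntegral hp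
    (abs_pos.2 (sub_ne_zero.2 hxy.symm)) (measurable_deriv u).aemeasurable Real.volume_uIoc.le hint
  calc ENNReal.ofReal ((p - 1) * (lorentzIndicatorConst p q / 2) ^ p * |y - x| ^ (1 - p))
      = ENNReal.ofReal (lorentzIndicatorConst p q) ^ p *
          ENNReal.ofReal ((p - 1) / 2 ^ p * |y - x| ^ (1 - p)) := by
        rw [ENNReal.ofReal_rpow_of_pos hκ, ← ENNReal.ofReal_mul (by positivity),
          Real.div_rpow hκ.le two_pos.le]
        congr 1
        ring
    _ ≤ (ENNReal.ofReal (lorentzIndicatorConst p q) * lorentzNorm volume p ⊤ (deriv u)) ^ p := by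
        rw [ENNReal.mul_rpow_of_nonneg _ _ hp₀.le]
        gcongr
    _ ≤ lorentzNorm (volume.restrict Ω) p q (fun x => |deriv u x|) ^ p := by
        rw [lorentzNorm_restrict_abs_deriv hp₀.le hsupp]
        gcongr
        exact mul_lorentzNorm_top_le_lorentzNorm hp₀ hq

lemma capacitance1_le_of_lipschitzWith {u : ℝ → ℝ} {c : NNReal} {S : Set ℝ} (hp : 0 < p)
    (hq : 0 < q) (hc : 0 < c) (hlip : LipschitzWith c u) (hcomp : HasCompactSupport u)
    (hsupp : tsupport u ⊆ Ω) (hone : K ⊆ interior {x | 1 ≤ u x})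
    (hderiv : Function.support (deriv u) ⊆ S) :
    capacitance1 p q K Ω ≤ ENNReal.ofReal ((lorentzIndicatorConst p q * c) ^ p) * volume S := by
  have hκ := lorentzIndicatorConst_pos hp hq
  have hbound : ∀ x, |deriv u x| ≤ |S.indicator (fun _ => (c : ℝ)) x| := fun x => by
    by_cases hx : x ∈ S
    · rw [indicator_of_mem hx, NNReal.abs_eq]
      exact norm_deriv_le_of_lipschitz hlip
    · rw [Function.notMem_support.1 fun h => hx (hderiv h), abs_zero]
      exact abs_nonneg _
  calc capacitance1 p q K Ω
      ≤ lorentzNorm (volume.restrict Ω) p q (fun x => |deriv u x|) ^ p :=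
        iInf₂_le u ⟨⟨c, hlip⟩, hcomp, hsupp, hone⟩
    _ ≤ lorentzNorm volume p q (S.indicator fun _ => (c : ℝ)) ^ p := by
        rw [lorentzNorm_restrict_abs_deriv hp.le hsupp]
        gcongr
        exact lorentzNorm_mono hp.le hbound
    _ = ENNReal.ofReal ((lorentzIndicatorConst p q * c) ^ p) * volume S := by
        rw [lorentzNorm_indicator_const hp hq (NNReal.coe_pos.2 hc),
          ENNReal.mul_rpow_of_nonneg _ _ hp.le, ← ENNReal.rpow_mul, one_div_mul_cancel hp.ne',
          ENNReal.rpow_one, ENNReal.ofReal_rpow_of_pos (by positivity)]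

lemma capacitance1_le_volume_cthickening_diff {δ : ℝ} (hp : 0 < p) (hq : 0 < q) (hδ : 0 < δ)
    (hK : Bornology.IsBounded K) (hKΩ : cthickening δ K ⊆ Ω) :
    capacitance1 p q K Ω ≤ ENNReal.ofReal ((lorentzIndicatorConst p q * (2 / δ)) ^ p) *
      volume (cthickening δ K \ K) := by
  have hδ₂ : 0 < δ / 2 := half_pos hδ
  set u : ℝ → ℝ := fun x => thickenedIndicator hδ₂ (thickening (δ / 2) K) x with hu
  have hlip : LipschitzWith (1 * (δ / 2).toNNReal⁻¹) u :=
    (LipschitzWith.subtype_val _).comp (lipschitzWith_thickenedIndicator hδ₂ _)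
  have hone : ∀ x ∈ thickening (δ / 2) K, u x = 1 := fun x hx => by
    simp only [hu, thickenedIndicator_one hδ₂ _ hx, NNReal.coe_one]
  have hsupp : tsupport u ⊆ cthickening δ K := by
    refine closure_minimal (fun x hx => ?_) isClosed_cthickening
    by_contra hxK
    refine hx (NNReal.coe_eq_zero.2 (thickenedIndicator_zero hδ₂ _ fun h => hxK ?_))
    have hsub := thickening_thickening_subset (δ / 2) (δ / 2) K
    rw [add_halves] at hsub
    exact thickening_subset_cthickening _ _ (hsub h)
  have hderiv : Function.support (deriv u) ⊆ cthickening δ K \ K := fun x hx => by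
    refine ⟨hsupp (support_deriv_subset hx), fun hxK => hx ?_⟩
    have hloc : u =ᶠ[nhds x] fun _ => 1 :=
      Filter.eventually_of_mem
        (isOpen_thickening.mem_nhds (self_subset_thickening hδ₂ K hxK)) hone
    rw [hloc.deriv_eq, deriv_const]
  have hcompact : IsCompact (cthickening δ K) :=
    isCompact_of_isClosed_isBounded isClosed_cthickening hK.cthickening
  convert capacitance1_le_of_lipschitzWith hp hq (by positivity) hlip
    (hcompact.of_isClosed_subset (isClosed_tsupport u) hsupp) (hsupp.trans hKΩ)
    ((self_subset_thickening hδ₂ K).trans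
      (interior_maximal (fun x hx => (hone x hx).ge) isOpen_thickening)) hderiv using 5
  rw [one_mul, NNReal.coe_inv, Real.coe_toNNReal _ hδ₂.le, inv_div]

section Interval

variable {A a b B : ℝ}

lemma cthickening_Icc_subset {δ : ℝ} (hδ : 0 ≤ δ) :
    cthickening δ (Icc a b) ⊆ Icc (a - δ) (b + δ) := by
  rw [isCompact_Icc.cthickening_eq_biUnion_closedBall hδ]
  refine iUnion₂_subset fun x hx => ?_
  rw [Real.closedBall_eq_Icc]
  exact Icc_subset_Icc (by linarith [hx.1]) (by linarith [hx.2])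

lemma volume_cthickening_Icc_diff_le {δ : ℝ} (hδ : 0 ≤ δ) :
    volume (cthickening δ (Icc a b) \ Icc a b) ≤ ENNReal.ofReal (2 * δ) := by
  have hsub : cthickening δ (Icc a b) \ Icc a b ⊆ Icc (a - δ) a ∪ Icc b (b + δ) := by
    rintro x ⟨hx, hxab⟩
    obtain ⟨hxa, hxb⟩ := cthickening_Icc_subset hδ hx
    rcases lt_or_ge x a with h | h
    · exact Or.inl ⟨hxa, h.le⟩
    · exact Or.inr ⟨not_lt.1 fun hb => hxab ⟨h, hb.le⟩, hxb⟩
  calc volume (cthickening δ (Icc a b) \ Icc a b)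
      ≤ volume (Icc (a - δ) a) + volume (Icc b (b + δ)) :=
        (measure_mono hsub).trans (measure_union_le _ _)
    _ = ENNReal.ofReal (2 * δ) := by
        rw [Real.volume_Icc, Real.volume_Icc, sub_sub_cancel, add_sub_cancel_left,
          ← ENNReal.ofReal_add hδ hδ, two_mul]

lemma le_capacitance1_Icc_Ioo (hp : 1 < p) (hq : 0 < q) (hA : A < a) (hab : a ≤ b) (hB : b < B) :
    ENNReal.ofReal ((p - 1) / 2 * (lorentzIndicatorConst p q / 2) ^ p *
      ((a - A) ^ (1 - p) + (B - b) ^ (1 - p))) ≤ capacitance1 p q (Icc a b) (Ioo A B) := by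
  set k := (p - 1) * (lorentzIndicatorConst p q / 2) ^ p
  have hleft : ENNReal.ofReal (k * (a - A) ^ (1 - p)) ≤ capacitance1 p q (Icc a b) (Ioo A B) := by
    have h := ofReal_rpow_abs_sub_le_capacitance1 hp hq (show A ∉ Ioo A B from left_notMem_Ioo)
      (left_mem_Icc.2 hab)
    rwa [abs_of_pos (sub_pos.2 hA)] at h
  have hright : ENNReal.ofReal (k * (B - b) ^ (1 - p)) ≤ capacitance1 p q (Icc a b) (Ioo A B) := by
    have h := ofReal_rpow_abs_sub_le_capacitance1 hp hq (show B ∉ Ioo A B from right_notMem_Ioo)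
      (right_mem_Icc.2 hab)
    rwa [abs_sub_comm, abs_of_pos (sub_pos.2 hB)] at h
  calc _ ≤ ENNReal.ofReal (max (k * (a - A) ^ (1 - p)) (k * (B - b) ^ (1 - p))) := by
        refine ENNReal.ofReal_le_ofReal ?_
        have hl := le_max_left (k * (a - A) ^ (1 - p)) (k * (B - b) ^ (1 - p))
        have hr := le_max_right (k * (a - A) ^ (1 - p)) (k * (B - b) ^ (1 - p))
        linarith
    _ ≤ _ := by
        rw [ENNReal.ofReal_max]
        exact max_le hleft hright

lemma capacitance1_Icc_Ioo_le (hp : 0 < p) (hq : 0 < q) (hA : A < a) (hB : b < B) :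
    capacitance1 p q (Icc a b) (Ioo A B) ≤ ENNReal.ofReal ((4 * lorentzIndicatorConst p q) ^ p *
      ((a - A) ^ (1 - p) + (B - b) ^ (1 - p))) := by
  have hκ := lorentzIndicatorConst_pos hp hq
  have hσ₁ : 0 < a - A := sub_pos.2 hA
  have hσ₂ : 0 < B - b := sub_pos.2 hB
  set m := min (a - A) (B - b) with hm
  have hm_pos : 0 < m := lt_min hσ₁ hσ₂
  have hsub : cthickening (m / 2) (Icc a b) ⊆ Ioo A B :=
    (cthickening_Icc_subset (by positivity)).trans fun x hx =>
      ⟨by linarith [hx.1, min_le_left (a - A) (B - b)],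
        by linarith [hx.2, min_le_right (a - A) (B - b)]⟩
  have hm_rpow : m ^ (1 - p) ≤ (a - A) ^ (1 - p) + (B - b) ^ (1 - p) := by
    rcases min_choice (a - A) (B - b) with h | h <;> rw [hm, h]
    · exact le_add_of_nonneg_right (by positivity)
    · exact le_add_of_nonneg_left (by positivity)
  calc capacitance1 p q (Icc a b) (Ioo A B)
      ≤ ENNReal.ofReal ((lorentzIndicatorConst p q * (2 / (m / 2))) ^ p) *
          ENNReal.ofReal (2 * (m / 2)) :=
        (capacitance1_le_volume_cthickening_diff hp hq (half_pos hm_pos) (isBounded_Icc a b)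
          hsub).trans (by gcongr; exact volume_cthickening_Icc_diff_le (by positivity))
    _ = ENNReal.ofReal ((4 * lorentzIndicatorConst p q) ^ p * m ^ (1 - p)) := by
        rw [← ENNReal.ofReal_mul (by positivity), Real.rpow_sub hm_pos, Real.rpow_one,
          show lorentzIndicatorConst p q * (2 / (m / 2)) = 4 * lorentzIndicatorConst p q / m by
            field_simp; norm_num,
          Real.div_rpow (by positivity) hm_pos.le]
        congr 1
        field_simp
    _ ≤ _ := by gcongr

end Interval

end Capacitance

theorem capacitance_interval_estimate_general (p : ℝ) (q : ℝ≥0∞) (hp : 1 < p) (hq : 0 < q) :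
    ∃ C : ℝ, 1 ≤ C ∧
      ∀ A a b B : ℝ, A < a → a ≤ b → b < B →
        ENNReal.ofReal (C⁻¹ * ((a - A) ^ (1 - p) + (B - b) ^ (1 - p))) ≤
          capacitance1 p q (Icc a b) (Ioo A B) ∧
        capacitance1 p q (Icc a b) (Ioo A B) ≤
          ENNReal.ofReal (C * ((a - A) ^ (1 - p) + (B - b) ^ (1 - p))) := by
  have hp₀ : 0 < p := by linarith
  have hκ := lorentzIndicatorConst_pos hp₀ hq
  set c := (p - 1) / 2 * (lorentzIndicatorConst p q / 2) ^ p
  set d := (4 * lorentzIndicatorConst p q) ^ p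
  have hc : 0 < c := mul_pos (by linarith) (by positivity)
  refine ⟨max 1 (max c⁻¹ d), le_max_left _ _, fun A a b B hA hab hB => ?_⟩
  have hsum : 0 ≤ (a - A) ^ (1 - p) + (B - b) ^ (1 - p) :=
    add_nonneg (Real.rpow_nonneg (by linarith) _) (Real.rpow_nonneg (by linarith) _)
  have hlower : (max 1 (max c⁻¹ d))⁻¹ ≤ c :=
    inv_le_of_inv_le₀ hc ((le_max_left _ _).trans (le_max_right _ _))
  have hupper : d ≤ max 1 (max c⁻¹ d) := (le_max_right _ _).trans (le_max_right _ _)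
  exact ⟨(ENNReal.ofReal_le_ofReal (mul_le_mul_of_nonneg_right hlower hsum)).trans
      (le_capacitance1_Icc_Ioo hp hq hA hab hB),
    (capacitance1_Icc_Ioo_le hp₀ hq hA hB).trans
      (ENNReal.ofReal_le_ofReal (mul_le_mul_of_nonneg_right hupper hsum))⟩

/-- Sharp two-sided estimate for the `p,q`-capacitance of the conductor
`([a,b], (A,B))` in terms of `σ₁ = a − A` and `σ₂ = B − b`. -/
theorem capacitance_interval_estimate (p : ℝ) (q : ℝ≥0∞) (hp : 1 < p) (hq : 1 ≤ q) :
    ∃ C : ℝ, 1 ≤ C ∧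
      ∀ A a b B : ℝ, A < a → a ≤ b → b < B →
        ENNReal.ofReal (C⁻¹ * ((a - A) ^ (1 - p) + (B - b) ^ (1 - p))) ≤
          capacitance1 p q (Icc a b) (Ioo A B) ∧
        capacitance1 p q (Icc a b) (Ioo A B) ≤
          ENNReal.ofReal (C * ((a - A) ^ (1 - p) + (B - b) ^ (1 - p))) :=
  capacitance_interval_estimate_general p q hp (zero_lt_one.trans_le hq)
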